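/- Let d ≥ 1, let Γ ⊆ ℕ^{1+d} be an admissible graded subsemigroup, and let Φ, Φ' : Γ → ℝ be two superadditive functions, each linearly bounded, i.e. there is C > 0 with |Φ(m,α)| ≤ C·m and |Φ'(m,α)| ≤ C·m on Γ. Then the graded pieces Γ_k are nonempty for all sufficiently large k, and the probability measures ν_k = (#Γ_k)^{-1} Σ_{α ∈ Γ_k} δ_{(Φ'(k,α) − Φ(k,α))/k} on ℝ converge weakly to a compactly supported probability measure on ℝ. -/

import Mathlib

open scoped BigOperators
open Filter MeasureTheory
open scoped ENNReal NNReal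

/-- Points of `ℕ^{1+d}`, written as a degree together with a vector in `ℕ^d`. -/
abbrev NPt (d : ℕ) := ℕ × (Fin d → ℕ)

/-- A subset of `ℕ^{1+d}` is a (graded) subsemigroup if it is closed under addition. -/
def IsGradedSubsemigroup {d : ℕ} (Γ : Set (NPt d)) : Prop :=
  ∀ x ∈ Γ, ∀ y ∈ Γ, x + y ∈ Γ

/-- Linear growth: there is `C > 0` with `|α|₁ ≤ C·m` for all `(m, α) ∈ Γ`. -/
def HasLinearGrowth {d : ℕ} (Γ : Set (NPt d)) : Prop :=
  ∃ C : ℝ, 0 < C ∧ ∀ p ∈ Γ, (∑ i, (p.2 i : ℝ)) ≤ C * p.1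

/-- The canonical embedding `ℕ^{1+d} → ℤ^{1+d}`. -/
def nptToInt {d : ℕ} (p : NPt d) : ℤ × (Fin d → ℤ) :=
  ((p.1 : ℤ), fun i => (p.2 i : ℤ))

/-- `Γ` generates `ℤ^{1+d}` as a group. -/
def GeneratesFullLattice {d : ℕ} (Γ : Set (NPt d)) : Prop :=
  AddSubgroup.closure (nptToInt '' Γ) = ⊤

/-- An admissible graded subsemigroup of `ℕ^{1+d}`. -/
def IsAdmissible {d : ℕ} (Γ : Set (NPt d)) : Prop :=
  IsGradedSubsemigroup Γ ∧ HasLinearGrowth Γ ∧ GeneratesFullLattice Γ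

/-- The canonical embedding `ℕ^{1+d} → ℝ^{1+d}`. -/
def nptToReal {d : ℕ} (p : NPt d) : ℝ × (Fin d → ℝ) :=
  ((p.1 : ℝ), fun i => (p.2 i : ℝ))

/-- The convex cone generated by a subset `S` of a real vector space: the set of finite
nonnegative linear combinations of elements of `S`. -/
def coneGen {E : Type*} [AddCommMonoid E] [Module ℝ E] (S : Set E) : Set E :=
  {y | ∃ (n : ℕ) (c : Fin n → ℝ) (p : Fin n → E),
    (∀ i, 0 ≤ c i) ∧ (∀ i, p i ∈ S) ∧ y = ∑ i, c i • p i}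

/-- The Okounkov body of a subset `Σ ⊆ ℕ^{1+d}`: the slice at height `1` of the closed convex
cone generated by `Σ` in `ℝ^{1+d}`. -/
def okounkovBody {d : ℕ} (S : Set (NPt d)) : Set (Fin d → ℝ) :=
  {x | ((1 : ℝ), x) ∈ closure (coneGen (nptToReal '' S))}

/-- The graded piece `Γ_m` of `Γ ⊆ ℕ^{1+d}`. -/
def gradedPiece {d : ℕ} (Γ : Set (NPt d)) (m : ℕ) : Set (Fin d → ℕ) :=
  {α | (m, α) ∈ Γ}

/-- The superlevel semigroup `Γ^{Φ,≥t}` of a function `Φ` on `Γ`. -/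
def superlevel {d : ℕ} (Γ : Set (NPt d)) (Φ : NPt d → ℝ) (t : ℝ) : Set (NPt d) :=
  {p ∈ Γ | p.1 * t ≤ Φ p}

/-- `θ = limsup_{n → ∞} sup_{α ∈ Γ_n} Φ(n,α)/n`. -/
noncomputable def thetaSup {d : ℕ} (Γ : Set (NPt d)) (Φ : NPt d → ℝ) : ℝ :=
  Filter.limsup (fun n : ℕ => sSup {r | ∃ α, (n, α) ∈ Γ ∧ r = Φ (n, α) / n}) Filter.atTop


/-- The relative empirical measure
`ν_k = (#Γ_k)⁻¹ Σ_{α ∈ Γ_k} δ_{(Φ'(k,α) − Φ(k,α))/k}` on `ℝ`. -/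
noncomputable def relEmpiricalMeasure {d : ℕ} (Γ : Set (NPt d)) (Φ Φ' : NPt d → ℝ) (k : ℕ) :
    Measure ℝ :=
  (Nat.card {α : Fin d → ℕ // (k, α) ∈ Γ} : ℝ≥0∞)⁻¹ •
    Measure.sum (fun α : {α : Fin d → ℕ // (k, α) ∈ Γ} =>
      Measure.dirac ((Φ' (k, α.1) - Φ (k, α.1)) / k))

/-!
Superadditivity makes `Φ (z k) / k` converge whenever `z k ∈ ℕ^{1+d}` and `k⁻¹ • z k` tends to a
point `(1, x)` in the interior of the cone spanned by `Γ`: the limit is the height at `(1, x)` of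
the cone generated by the graph of `Φ`, the concave transform of `Φ` at `x`. The lower bound comes
from writing `z k` as a combination, with natural coefficients, of elements of `Γ` that almost
realise that height. For the upper bound, the graph point of `z k`, scaled by `k⁻¹`, is mixed with
a small amount of another point of the cone so as to lie exactly over `(1, x)`.

The lower bound also gives `z k ∈ Γ` for large `k`, so the points `α / k`, `α ∈ Γ_k`, fill the
`k⁻¹`-lattice in the interior of the Okounkov body `Δ`. Averages over `Γ_k` are thus Riemann sums
for averages over `Δ`, and `ν_k` converges to the distribution on `Δ` of the difference of the two
concave transforms.
-/

section Superadditive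

/-- Superadditivity of a function on a subset of its domain. It is only required of pairs of points
of `Γ`; the values of `Φ` off `Γ` are arbitrary. -/
def SuperadditiveOn {M N : Type*} [Add M] [Add N] [LE N] (Φ : M → N) (Γ : Set M) : Prop :=
  ∀ x ∈ Γ, ∀ y ∈ Γ, Φ x + Φ y ≤ Φ (x + y)

variable {ι M N : Type*} [AddCommMonoid M] {Γ : Set M}

lemma nsmul_mem_of_add_mem (hΓ : ∀ x ∈ Γ, ∀ y ∈ Γ, x + y ∈ Γ) {x : M} (hx : x ∈ Γ) {n : ℕ}
    (hn : n ≠ 0) : n • x ∈ Γ := by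
  simpa using Finset.sum_induction_nonempty (fun _ : ℕ => x) (· ∈ Γ) (fun x y hx => hΓ x hx y)
    (Finset.nonempty_range_iff.2 hn) fun _ _ => hx

lemma sum_nsmul_mem_of_add_mem (hΓ : ∀ x ∈ Γ, ∀ y ∈ Γ, x + y ∈ Γ) {s : Finset ι}
    (hs : s.Nonempty) {g : ι → M} (hg : ∀ i ∈ s, g i ∈ Γ) {e : ι → ℕ} (he : ∀ i ∈ s, e i ≠ 0) :
    ∑ i ∈ s, e i • g i ∈ Γ :=
  Finset.sum_induction_nonempty _ (· ∈ Γ) (fun x y hx => hΓ x hx y) hs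
    fun i hi => nsmul_mem_of_add_mem hΓ (hg i hi) (he i hi)

variable [AddCommMonoid N] [Preorder N] [IsOrderedAddMonoid N] {Φ : M → N}

lemma SuperadditiveOn.sum_le (hΦ : SuperadditiveOn Φ Γ) (hΓ : ∀ x ∈ Γ, ∀ y ∈ Γ, x + y ∈ Γ)
    {s : Finset ι} (hs : s.Nonempty) {g : ι → M} (hg : ∀ i ∈ s, g i ∈ Γ) :
    ∑ i ∈ s, Φ (g i) ≤ Φ (∑ i ∈ s, g i) :=
  Finset.le_sum_nonempty_of_subadditive_on_pred (N := Nᵒᵈ) Φ (· ∈ Γ) (fun x y hx => hΦ x hx y)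
    (fun x y hx => hΓ x hx y) g s hs hg

lemma SuperadditiveOn.sum_nsmul_le (hΦ : SuperadditiveOn Φ Γ)
    (hΓ : ∀ x ∈ Γ, ∀ y ∈ Γ, x + y ∈ Γ) {s : Finset ι} (hs : s.Nonempty) {g : ι → M}
    (hg : ∀ i ∈ s, g i ∈ Γ) {e : ι → ℕ} (he : ∀ i ∈ s, e i ≠ 0) :
    ∑ i ∈ s, e i • Φ (g i) ≤ Φ (∑ i ∈ s, e i • g i) := by
  refine (Finset.sum_le_sum fun i hi => ?_).trans
    (hΦ.sum_le hΓ hs fun i hi => nsmul_mem_of_add_mem hΓ (hg i hi) (he i hi))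
  simpa using hΦ.sum_le hΓ (Finset.nonempty_range_iff.2 (he i hi)) (g := fun _ => g i)
    fun _ _ => hg i hi

end Superadditive

section LinearCombinations

lemma exists_forall_abs_le_and_sum_zsmul_eq {ι G : Type*} [AddCommGroup G] {g : ι → G}
    {B : Finset ι} (hB : AddSubgroup.closure (g '' B) = ⊤) (F : Finset G) :
    ∃ N : ℤ, ∀ f ∈ F, ∃ n : ι → ℤ, (∀ i ∈ B, |n i| ≤ N) ∧ ∑ i ∈ B, n i • g i = f := by
  classical
  have hrep (f : G) : ∃ n : ι → ℤ, ∑ i ∈ B, n i • g i = f := by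
    have hf : f ∈ Submodule.span ℤ (g '' B) := by
      rw [← Submodule.mem_toAddSubgroup, Submodule.span_int_eq_addSubgroupClosure, hB]
      exact AddSubgroup.mem_top f
    simpa using Submodule.mem_span_image_finset_iff_exists_fun' ℤ |>.1 hf
  choose n hn using hrep
  obtain ⟨N, hN⟩ := ((F ×ˢ B).image fun fi => |n fi.1 fi.2|).exists_le
  exact ⟨N, fun f hf => ⟨n f, fun i hi =>
    hN _ (Finset.mem_image.2 ⟨(f, i), Finset.mk_mem_product hf hi, rfl⟩), hn f⟩⟩

/-- The coefficients come from a linear section of `c ↦ ∑ i ∈ B, c i • f i`, which is continuous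
because `E` is finite-dimensional. -/
lemma exists_tendsto_coeff_of_span_eq_top {𝕜 ι α E : Type*} [NontriviallyNormedField 𝕜]
    [CompleteSpace 𝕜] [AddCommGroup E] [Module 𝕜 E] [TopologicalSpace E]
    [IsTopologicalAddGroup E] [ContinuousSMul 𝕜 E] [T2Space E] [FiniteDimensional 𝕜 E]
    {f : ι → E} {B : Finset ι} (hB : Submodule.span 𝕜 (f '' B) = ⊤) (a : ι → 𝕜)
    {l : Filter α} {w : α → E} (hw : Tendsto w l (nhds (∑ i ∈ B, a i • f i))) :
    ∃ c : α → ι → 𝕜, (∀ i, Tendsto (c · i) l (nhds (a i))) ∧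
      ∀ x, ∑ i ∈ B, c x i • f i = w x := by
  classical
  let L : (ι → 𝕜) →ₗ[𝕜] E := ∑ i ∈ B, (LinearMap.proj i).smulRight (f i)
  have hL (c : ι → 𝕜) : L c = ∑ i ∈ B, c i • f i := by simp [L]
  have hrange : L.range = ⊤ := by
    rw [eq_top_iff, ← hB, Submodule.span_le]
    rintro _ ⟨i, hi, rfl⟩
    refine ⟨Pi.single i 1, ?_⟩
    simpa [hL, Pi.single_apply, ite_smul] using fun h => absurd (Finset.mem_coe.1 hi) h
  obtain ⟨ρ, hρ⟩ := L.exists_rightInverse_of_surjective hrange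
  refine ⟨fun x => a + ρ (w x - L a), fun i => ?_, fun x => ?_⟩
  · have hρi : Continuous fun v => ρ (v - L a) i :=
      (continuous_apply i).comp
        (ρ.continuous_of_finiteDimensional.comp (continuous_id.sub continuous_const))
    simpa [hL] using ((hρi.tendsto _).comp hw).const_add (a i)
  · have hsection (v : E) : L (ρ v) = v := LinearMap.congr_fun hρ v
    rw [← hL, map_add, hsection, add_sub_cancel]

lemma exists_pos_coeff_sum_eq_add {ι R E : Type*} [Semiring R] [PartialOrder R] [IsOrderedRing R]
    [AddCommMonoid E] [Module R E] {f : ι → E} {A : Set ι} {T : Finset ι} (hT : ↑T ⊆ A)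
    {a : ι → R} (ha : ∀ i ∈ T, 0 < a i) {y : E} (hy : y ∈ PointedCone.hull R (f '' A)) :
    ∃ (B : Finset ι) (b : ι → R), T ⊆ B ∧ ↑B ⊆ A ∧ (∀ i ∈ B, 0 < b i) ∧
      ∑ i ∈ B, b i • f i = ∑ i ∈ T, a i • f i + y := by
  classical
  obtain ⟨c, hcA, rfl⟩ := (Finsupp.mem_span_image_iff_linearCombination _).1 hy
  refine ⟨T ∪ c.support, fun i => (if i ∈ T then a i else 0) + c i, Finset.subset_union_left,
    ?_, fun i hi => ?_, ?_⟩
  · simpa using ⟨hT, hcA⟩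
  · have hci : 0 ≤ (c i : R) := (c i).2
    by_cases hiT : i ∈ T
    · simpa [hiT] using add_pos_of_pos_of_nonneg (ha i hiT) hci
    · have hci' : c i ≠ 0 := by simpa [hiT] using hi
      simpa [hiT] using lt_of_le_of_ne hci fun h => hci' (Subtype.ext h.symm)
  · rw [Finsupp.linearCombination_apply,
      Finsupp.sum_of_support_subset c (Finset.subset_union_right (s₁ := T)) _ (by simp)]
    simp only [add_smul, Finset.sum_add_distrib, ite_smul, zero_smul, Finset.sum_ite_mem,
      Finset.union_inter_cancel_left]
    rfl

end LinearCombinations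

section Lattice

variable {d : ℕ}

/-- The inclusion `ℤ^{1+d} → ℝ^{1+d}`, through which the embedding `nptToReal` factors. -/
def intToReal (d : ℕ) : ℤ × (Fin d → ℤ) →+ ℝ × (Fin d → ℝ) :=
  (Int.castAddHom ℝ).prodMap ((Int.castAddHom ℝ).compLeft (Fin d))

/-- The embedding `nptToInt` as an additive homomorphism. -/
def nptToIntHom (d : ℕ) : NPt d →+ ℤ × (Fin d → ℤ) :=
  (Nat.castAddMonoidHom ℤ).prodMap ((Nat.castAddMonoidHom ℤ).compLeft (Fin d))

lemma coe_nptToIntHom : ⇑(nptToIntHom d) = nptToInt := rfl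

lemma intToReal_nptToInt (p : NPt d) : intToReal d (nptToInt p) = nptToReal p := by
  ext <;> simp [intToReal, nptToInt, nptToReal]

lemma intToReal_le_intToReal {v w : ℤ × (Fin d → ℤ)} :
    intToReal d v ≤ intToReal d w ↔ v ≤ w := by
  simp [intToReal, Prod.le_def, Pi.le_def]

lemma nptToInt_injective : Function.Injective (nptToInt (d := d)) := fun p q h => by
  simpa [nptToInt, Prod.ext_iff, funext_iff] using h

lemma nptToReal_nonneg (p : NPt d) : 0 ≤ nptToReal p :=
  ⟨Nat.cast_nonneg _, fun _ => Nat.cast_nonneg _⟩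

lemma span_range_intToReal : Submodule.span ℝ (Set.range (intToReal d)) = ⊤ := by
  rw [eq_top_iff]
  rintro ⟨r, x⟩ -
  have hrx : (r, x) = r • intToReal d (1, 0) + ∑ j, x j • intToReal d (0, Pi.single j 1) := by
    ext i
    · simp [intToReal, Prod.fst_sum]
    · simp [intToReal, Prod.snd_sum, Pi.single_apply]
  rw [hrx]
  exact add_mem (Submodule.smul_mem _ _ (Submodule.subset_span ⟨_, rfl⟩))
    (sum_mem fun j _ => Submodule.smul_mem _ _ (Submodule.subset_span ⟨_, rfl⟩))

lemma GeneratesFullLattice.mono {Γ Γ' : Set (NPt d)} (h : GeneratesFullLattice Γ)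
    (hsub : Γ ⊆ Γ') : GeneratesFullLattice Γ' :=
  top_le_iff.1 (h.symm.le.trans (AddSubgroup.closure_mono (Set.image_mono hsub)))

lemma GeneratesFullLattice.exists_finset {Γ : Set (NPt d)} (h : GeneratesFullLattice Γ) :
    ∃ T : Finset (NPt d), ↑T ⊆ Γ ∧ GeneratesFullLattice (T : Set (NPt d)) := by
  classical
  have hspan : Submodule.span ℤ (nptToInt '' Γ) = ⊤ :=
    Submodule.toAddSubgroup_injective <|
      (Submodule.span_int_eq_addSubgroupClosure _).trans h
  obtain ⟨s, hsΓ, hs⟩ := (Submodule.fg_span_iff_fg_span_finset_subset (nptToInt '' Γ)).1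
    (hspan ▸ Module.Finite.fg_top)
  obtain ⟨T, hTΓ, rfl⟩ := Finset.subset_set_image_iff.1 hsΓ
  refine ⟨T, hTΓ, ?_⟩
  rw [GeneratesFullLattice, ← Submodule.span_int_eq_addSubgroupClosure, ← Finset.coe_image, ← hs,
    hspan]
  rfl

lemma GeneratesFullLattice.span_nptToReal {Γ : Set (NPt d)} (h : GeneratesFullLattice Γ) :
    Submodule.span ℝ (nptToReal '' Γ) = ⊤ := by
  rw [eq_top_iff, ← span_range_intToReal, Submodule.span_le, Set.range_subset_iff]
  intro v
  have hv : v ∈ AddSubgroup.closure (nptToInt '' Γ) := h ▸ AddSubgroup.mem_top v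
  induction hv using AddSubgroup.closure_induction with
  | mem _ hx =>
    obtain ⟨p, hp, rfl⟩ := hx
    exact Submodule.subset_span ⟨p, hp, (intToReal_nptToInt p).symm⟩
  | zero => simp
  | add _ _ _ _ hx hy => simpa using add_mem hx hy
  | neg _ _ hx => simpa using hx

lemma GeneratesFullLattice.nonempty {Γ : Set (NPt d)} (h : GeneratesFullLattice Γ) :
    Γ.Nonempty := by
  by_contra! hΓ
  subst hΓ
  simp [GeneratesFullLattice, bot_ne_top] at h

lemma sub_sum_floor_mem_Icc {B : Finset (NPt d)} {z : NPt d} {c : NPt d → ℝ}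
    (hz : nptToReal z = ∑ p ∈ B, c p • nptToReal p) :
    nptToInt z - ∑ p ∈ B, ⌊c p⌋ • nptToInt p ∈ Set.Icc 0 (∑ p ∈ B, nptToInt p) := by
  have hfract : intToReal d (nptToInt z - ∑ p ∈ B, ⌊c p⌋ • nptToInt p) =
      ∑ p ∈ B, Int.fract (c p) • nptToReal p := by
    simp only [map_sub, map_sum, map_zsmul, intToReal_nptToInt, hz, ← Int.self_sub_floor, sub_smul,
      Finset.sum_sub_distrib, Int.cast_smul_eq_zsmul]
  simp only [Set.mem_Icc, ← intToReal_le_intToReal, hfract, map_zero, map_sum, intToReal_nptToInt]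
  exact ⟨Finset.sum_nonneg fun p _ => smul_nonneg (Int.fract_nonneg _) (nptToReal_nonneg p),
    Finset.sum_le_sum fun p _ =>
      smul_le_of_le_one_left (nptToReal_nonneg p) (Int.fract_lt_one _).le⟩

lemma GeneratesFullLattice.exists_forall_int_coeff {B : Finset (NPt d)}
    (hB : GeneratesFullLattice (B : Set (NPt d))) :
    ∃ N : ℝ, ∀ (z : NPt d) (c : NPt d → ℝ), nptToReal z = ∑ p ∈ B, c p • nptToReal p →
      ∃ m : NPt d → ℤ, (∀ p ∈ B, |m p - c p| ≤ N) ∧ nptToInt z = ∑ p ∈ B, m p • nptToInt p := by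
  classical
  obtain ⟨N, hN⟩ := exists_forall_abs_le_and_sum_zsmul_eq hB (Finset.Icc 0 (∑ p ∈ B, nptToInt p))
  refine ⟨N + 1, fun z c hz => ?_⟩
  obtain ⟨n, hnN, hn⟩ := hN _ (Finset.mem_Icc.2 (sub_sum_floor_mem_Icc hz))
  refine ⟨fun p => ⌊c p⌋ + n p, fun p hp => ?_, ?_⟩
  · have hnp : |(n p : ℝ)| ≤ N := by exact_mod_cast hnN p hp
    have hfract : |(⌊c p⌋ : ℝ) - c p| ≤ 1 := by
      rw [abs_sub_comm, Int.self_sub_floor, Int.abs_fract]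
      exact (Int.fract_lt_one _).le
    calc |((⌊c p⌋ + n p : ℤ) : ℝ) - c p| = |(n p : ℝ) + (⌊c p⌋ - c p)| := by push_cast; ring_nf
      _ ≤ N + 1 := (abs_add_le _ _).trans (add_le_add hnp hfract)
  · simp only [add_smul, Finset.sum_add_distrib, hn, add_sub_cancel]

/-- Real coefficients of `z k` grow like `k * a p`, and rounding them to integral ones costs a
bounded amount, so they stay positive. -/
lemma GeneratesFullLattice.exists_nat_coeff_tendsto {B : Finset (NPt d)}
    (hB : GeneratesFullLattice (B : Set (NPt d))) {a : NPt d → ℝ} (ha : ∀ p ∈ B, 0 < a p)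
    {z : ℕ → NPt d} (hz : Tendsto (fun k : ℕ => (k : ℝ)⁻¹ • nptToReal (z k)) atTop
      (nhds (∑ p ∈ B, a p • nptToReal p))) :
    ∃ e : ℕ → NPt d → ℕ, (∀ p ∈ B, Tendsto (fun k => (e k p : ℝ) / k) atTop (nhds (a p))) ∧
      ∀ᶠ k in atTop, (∀ p ∈ B, e k p ≠ 0) ∧ z k = ∑ p ∈ B, e k p • p := by
  obtain ⟨c, hca, hc⟩ := exists_tendsto_coeff_of_span_eq_top hB.span_nptToReal a hz
  obtain ⟨N, hN⟩ := hB.exists_forall_int_coeff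
  have hcoeff (k : ℕ) : ∃ m : NPt d → ℤ, k ≠ 0 →
      (∀ p ∈ B, |m p - k * c k p| ≤ N) ∧ nptToInt (z k) = ∑ p ∈ B, m p • nptToInt p := by
    rcases eq_or_ne k 0 with rfl | hk
    · exact ⟨0, fun h => absurd rfl h⟩
    · obtain ⟨m, hm⟩ := hN (z k) (fun p => k * c k p) (by
        simp_rw [mul_smul, ← Finset.smul_sum, hc]
        exact (smul_inv_smul₀ (Nat.cast_ne_zero.2 hk) _).symm)
      exact ⟨m, fun _ => hm⟩
  choose m hm using hcoeff
  have hlim : ∀ p ∈ B, Tendsto (fun k => (m k p : ℝ) / k) atTop (nhds (a p)) := fun p hp => by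
    have herr : Tendsto (fun k : ℕ => (m k p : ℝ) / k - c k p) atTop (nhds 0) := by
      refine squeeze_zero_norm' ?_ (tendsto_const_div_atTop_nhds_zero_nat N)
      filter_upwards [eventually_gt_atTop 0] with k hk
      have hk' : (0 : ℝ) < k := Nat.cast_pos.2 hk
      rw [Real.norm_eq_abs, div_sub' hk'.ne', abs_div, abs_of_pos hk']
      exact div_le_div_of_nonneg_right ((hm k hk.ne').1 p hp) hk'.le
    simpa using herr.add (hca p)
  have hpos : ∀ᶠ k in atTop, ∀ p ∈ B, 0 < m k p := by
    rw [Finset.eventually_all]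
    intro p hp
    filter_upwards [(hlim p hp).eventually_const_lt (ha p hp)] with k hk
    have : 0 < (m k p : ℝ) := by
      by_contra! h
      exact hk.not_ge (div_nonpos_of_nonpos_of_nonneg h k.cast_nonneg)
    exact_mod_cast this
  refine ⟨fun k p => (m k p).toNat, fun p hp => (hlim p hp).congr' ?_, ?_⟩
  · filter_upwards [hpos] with k hk
    have htoNat : ((m k p).toNat : ℝ) = m k p := by
      exact_mod_cast Int.toNat_of_nonneg (hk p hp).le
    rw [htoNat]
  · filter_upwards [hpos, eventually_ne_atTop 0] with k hk hk0
    refine ⟨fun p hp => by have := hk p hp; omega, nptToInt_injective ?_⟩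
    rw [(hm k hk0).2, ← coe_nptToIntHom, map_sum]
    refine Finset.sum_congr rfl fun p hp => ?_
    rw [map_nsmul, ← natCast_zsmul, Int.toNat_of_nonneg (hk p hp).le]

end Lattice

section Cones

variable {d : ℕ} {Γ : Set (NPt d)} {Φ : NPt d → ℝ}

/-- The convex cone in `ℝ^{1+d}` generated by `Γ`. -/
def realCone (Γ : Set (NPt d)) : PointedCone ℝ (ℝ × (Fin d → ℝ)) :=
  PointedCone.hull ℝ (nptToReal '' Γ)

/-- The convex cone in `ℝ^{1+d} × ℝ` generated by the graph of `Φ` over `Γ`. -/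
def graphCone (Γ : Set (NPt d)) (Φ : NPt d → ℝ) : PointedCone ℝ ((ℝ × (Fin d → ℝ)) × ℝ) :=
  PointedCone.hull ℝ ((fun p => (nptToReal p, Φ p)) '' Γ)

/-- The part of `graphCone Γ Φ` made of the combinations with positive coefficients on a finite set
generating the lattice. It lies over the interior of `realCone Γ`; near its points, lattice points
are natural combinations of the same generators. -/
def strictGraphCone (Γ : Set (NPt d)) (Φ : NPt d → ℝ) : Set ((ℝ × (Fin d → ℝ)) × ℝ) :=
  {y | ∃ (B : Finset (NPt d)) (a : NPt d → ℝ), ↑B ⊆ Γ ∧ GeneratesFullLattice (B : Set (NPt d)) ∧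
    (∀ p ∈ B, 0 < a p) ∧ ∑ p ∈ B, a p • (nptToReal p, Φ p) = y}

lemma coneGen_eq_hull {E : Type*} [AddCommMonoid E] [Module ℝ E] (S : Set E) :
    coneGen S = (PointedCone.hull ℝ S : Set E) := by
  ext y
  simp only [coneGen, Set.mem_ofPred_eq, SetLike.mem_coe, PointedCone.hull, Submodule.mem_span_set']
  constructor
  · rintro ⟨n, c, p, hc, hp, rfl⟩
    exact ⟨n, fun i => ⟨c i, hc i⟩, fun i => ⟨p i, hp i⟩, rfl⟩
  · rintro ⟨n, c, p, rfl⟩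
    exact ⟨n, fun i => c i, fun i => p i, fun i => (c i).2, fun i => (p i).2, rfl⟩

lemma nonneg_of_mem_hull {E : Type*} [AddCommMonoid E] [Module ℝ E] {S : Set E} (f : E →ₗ[ℝ] ℝ)
    (hf : ∀ y ∈ S, 0 ≤ f y) {y : E} (hy : y ∈ PointedCone.hull ℝ S) : 0 ≤ f y := by
  have hle : PointedCone.hull ℝ S ≤ (PointedCone.positive ℝ ℝ).comap f := Submodule.span_le.2 hf
  exact hle hy

lemma mem_okounkovBody_iff {x : Fin d → ℝ} :
    x ∈ okounkovBody Γ ↔ ((1 : ℝ), x) ∈ closure (realCone Γ : Set (ℝ × (Fin d → ℝ))) := by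
  rw [realCone, ← coneGen_eq_hull]
  rfl

lemma mk_mem_graphCone {p : NPt d} (hp : p ∈ Γ) : (nptToReal p, Φ p) ∈ graphCone Γ Φ :=
  PointedCone.subset_hull ⟨p, hp, rfl⟩

lemma mem_realCone_iff_exists_mem_graphCone (Φ : NPt d → ℝ) {v : ℝ × (Fin d → ℝ)} :
    v ∈ realCone Γ ↔ ∃ r, (v, r) ∈ graphCone Γ Φ := by
  have hmap : (graphCone Γ Φ).map (LinearMap.fst ℝ (ℝ × (Fin d → ℝ)) ℝ) = realCone Γ := by
    refine (Submodule.map_span _ _).trans ?_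
    rw [Set.image_image]
    rfl
  simp [← hmap, PointedCone.mem_map]

lemma strictGraphCone_subset_graphCone : strictGraphCone Γ Φ ⊆ graphCone Γ Φ := by
  rintro _ ⟨B, a, hBΓ, -, ha, rfl⟩
  exact sum_mem fun p hp => (graphCone Γ Φ).smul_mem (ha p hp).le (mk_mem_graphCone (hBΓ hp))

lemma smul_mem_strictGraphCone {y : (ℝ × (Fin d → ℝ)) × ℝ} (hy : y ∈ strictGraphCone Γ Φ) {c : ℝ}
    (hc : 0 < c) : c • y ∈ strictGraphCone Γ Φ := by
  obtain ⟨B, a, hBΓ, hB, ha, rfl⟩ := hy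
  refine ⟨B, c • a, hBΓ, hB, fun p hp => mul_pos hc (ha p hp), ?_⟩
  simp only [Finset.smul_sum, Pi.smul_apply, smul_assoc]

lemma add_mem_strictGraphCone {y z : (ℝ × (Fin d → ℝ)) × ℝ} (hy : y ∈ strictGraphCone Γ Φ)
    (hz : z ∈ graphCone Γ Φ) : y + z ∈ strictGraphCone Γ Φ := by
  obtain ⟨B, a, hBΓ, hB, ha, rfl⟩ := hy
  obtain ⟨B', b, hBB', hB'Γ, hb, hsum⟩ := exists_pos_coeff_sum_eq_add hBΓ ha hz
  exact ⟨B', b, hB'Γ, hB.mono hBB', hb, hsum⟩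

lemma GeneratesFullLattice.strictGraphCone_nonempty (hΓ : GeneratesFullLattice Γ)
    (Φ : NPt d → ℝ) : (strictGraphCone Γ Φ).Nonempty := by
  obtain ⟨T, hTΓ, hT⟩ := hΓ.exists_finset
  exact ⟨_, T, 1, hTΓ, hT, fun _ _ => one_pos, rfl⟩

lemma GeneratesFullLattice.exists_mem_strictGraphCone (hΓ : GeneratesFullLattice Γ)
    (Φ : NPt d → ℝ) {v : ℝ × (Fin d → ℝ)}
    (hv : v ∈ interior (realCone Γ : Set (ℝ × (Fin d → ℝ)))) :
    ∃ r, (v, r) ∈ strictGraphCone Γ Φ := by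
  obtain ⟨u, hu⟩ := hΓ.strictGraphCone_nonempty Φ
  have hlim : Tendsto (fun ε : ℝ => v - ε • u.1) (nhdsWithin 0 (Set.Ioi 0)) (nhds v) :=
    (Continuous.tendsto' (by fun_prop) 0 v (by simp)).mono_left nhdsWithin_le_nhds
  obtain ⟨ε, hε, hε0⟩ := ((hlim.eventually_mem (mem_interior_iff_mem_nhds.1 hv)).and
    self_mem_nhdsWithin).exists
  obtain ⟨r, hr⟩ := (mem_realCone_iff_exists_mem_graphCone Φ).1 hε
  have hsum : ε • u + (v - ε • u.1, r) = (v, ε • u.2 + r) := by ext1 <;> simp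
  exact ⟨_, hsum ▸ add_mem_strictGraphCone (smul_mem_strictGraphCone hu hε0) hr⟩

lemma exists_tendsto_mem_graphCone {v : ℝ × (Fin d → ℝ)} {r : ℝ}
    (hv : (v, r) ∈ strictGraphCone Γ Φ) {α : Type*} {l : Filter α} {w : α → ℝ × (Fin d → ℝ)}
    (hw : Tendsto w l (nhds v)) :
    ∃ ρ : α → ℝ, Tendsto ρ l (nhds r) ∧ ∀ᶠ x in l, (w x, ρ x) ∈ graphCone Γ Φ := by
  obtain ⟨B, a, hBΓ, hB, ha, hsum⟩ := hv
  obtain ⟨rfl, rfl⟩ := Prod.mk.inj ((prod_mk_sum B _ _).trans hsum)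
  obtain ⟨c, hca, hc⟩ := exists_tendsto_coeff_of_span_eq_top hB.span_nptToReal a hw
  refine ⟨fun x => ∑ p ∈ B, c x p • Φ p, tendsto_finsetSum _ fun p _ => (hca p).smul_const _, ?_⟩
  have hpos : ∀ᶠ x in l, ∀ p ∈ B, 0 < c x p :=
    (Finset.eventually_all B).2 fun p hp => (hca p).eventually_const_lt (ha p hp)
  filter_upwards [hpos] with x hx
  have hmem : ∑ p ∈ B, c x p • (nptToReal p, Φ p) ∈ graphCone Γ Φ :=
    sum_mem fun p hp => (graphCone Γ Φ).smul_mem (hx p hp).le (mk_mem_graphCone (hBΓ hp))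
  rwa [← hc x, prod_mk_sum]

lemma SuperadditiveOn.eventually_lt_div (hΦ : SuperadditiveOn Φ Γ) (hΓ : IsGradedSubsemigroup Γ)
    {v : ℝ × (Fin d → ℝ)} {r : ℝ} (hv : (v, r) ∈ strictGraphCone Γ Φ) {z : ℕ → NPt d}
    (hz : Tendsto (fun k : ℕ => (k : ℝ)⁻¹ • nptToReal (z k)) atTop (nhds v)) {s : ℝ} (hs : s < r) :
    ∀ᶠ k in atTop, z k ∈ Γ ∧ s < Φ (z k) / k := by
  obtain ⟨B, a, hBΓ, hB, ha, hsum⟩ := hv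
  obtain ⟨rfl, rfl⟩ := Prod.mk.inj ((prod_mk_sum B _ _).trans hsum)
  obtain ⟨e, he, hze⟩ := hB.exists_nat_coeff_tendsto ha hz
  have hlim : Tendsto (fun k => ∑ p ∈ B, ((e k p : ℝ) / k) • Φ p) atTop
      (nhds (∑ p ∈ B, a p • Φ p)) := tendsto_finsetSum _ fun p hp => (he p hp).smul_const _
  filter_upwards [hze, hlim.eventually_const_lt hs] with k ⟨he0, hzk⟩ hsk
  have hBne : B.Nonempty := Finset.coe_nonempty.1 hB.nonempty
  rw [hzk]
  refine ⟨sum_nsmul_mem_of_add_mem hΓ hBne hBΓ he0, hsk.trans_le ?_⟩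
  calc ∑ p ∈ B, ((e k p : ℝ) / k) • Φ p = (∑ p ∈ B, e k p • Φ p) / k := by
        simp only [Finset.sum_div, smul_eq_mul, nsmul_eq_mul, div_mul_eq_mul_div]
    _ ≤ Φ (∑ p ∈ B, e k p • p) / k :=
        div_le_div_of_nonneg_right (hΦ.sum_nsmul_le hΓ hBne hBΓ he0) k.cast_nonneg

end Cones

section ConcaveTransform

variable {d : ℕ} {Γ : Set (NPt d)} {Φ : NPt d → ℝ} {C : ℝ} {x : Fin d → ℝ} {z : ℕ → NPt d}

/-- The concave transform of `Φ` (in the sense of Boucksom–Chen): the upper boundary, over the slice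
at height `1`, of the cone generated by the graph of `Φ`. It is `sSup ∅ = 0` off the cone. -/
noncomputable def concaveTransform (Γ : Set (NPt d)) (Φ : NPt d → ℝ) (x : Fin d → ℝ) : ℝ :=
  sSup {r | (((1 : ℝ), x), r) ∈ graphCone Γ Φ}

lemma abs_le_of_mem_graphCone (hΦ : ∀ p ∈ Γ, |Φ p| ≤ C * p.1) {y : (ℝ × (Fin d → ℝ)) × ℝ}
    (hy : y ∈ graphCone Γ Φ) : |y.2| ≤ C * y.1.1 := by
  let deg : (ℝ × (Fin d → ℝ)) × ℝ →ₗ[ℝ] ℝ := LinearMap.fst ℝ ℝ (Fin d → ℝ) ∘ₗ LinearMap.fst ℝ _ ℝ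
  let val : (ℝ × (Fin d → ℝ)) × ℝ →ₗ[ℝ] ℝ := LinearMap.snd ℝ _ ℝ
  refine abs_le'.2 ⟨sub_nonneg.1 ?_, sub_nonneg.1 ?_⟩
  · refine nonneg_of_mem_hull (C • deg - val) ?_ hy
    rintro _ ⟨p, hp, rfl⟩
    exact sub_nonneg.2 (abs_le'.1 (hΦ p hp)).1
  · refine nonneg_of_mem_hull (C • deg - -val) ?_ hy
    rintro _ ⟨p, hp, rfl⟩
    exact sub_nonneg.2 (abs_le'.1 (hΦ p hp)).2

lemma bddAbove_setOf_mem_graphCone (hΦ : ∀ p ∈ Γ, |Φ p| ≤ C * p.1) (v : ℝ × (Fin d → ℝ)) :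
    BddAbove {r | (v, r) ∈ graphCone Γ Φ} :=
  ⟨C * v.1, fun _ hr => (le_abs_self _).trans (abs_le_of_mem_graphCone hΦ hr)⟩

lemma abs_concaveTransform_le (hC : 0 ≤ C) (hΦ : ∀ p ∈ Γ, |Φ p| ≤ C * p.1) (x : Fin d → ℝ) :
    |concaveTransform Γ Φ x| ≤ C := by
  have hle : ∀ r ∈ {r | (((1 : ℝ), x), r) ∈ graphCone Γ Φ}, |r| ≤ C := fun r hr => by
    simpa using abs_le_of_mem_graphCone hΦ hr
  rcases Set.eq_empty_or_nonempty {r | (((1 : ℝ), x), r) ∈ graphCone Γ Φ} with h | h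
  · simpa [concaveTransform, h] using hC
  · exact abs_le.2 ⟨le_csSup_of_le (bddAbove_setOf_mem_graphCone hΦ _) h.some_mem
      (abs_le.1 (hle _ h.some_mem)).1, csSup_le h fun r hr => (abs_le.1 (hle r hr)).2⟩

lemma GeneratesFullLattice.eventually_lt_div (hΓ : GeneratesFullLattice Γ)
    (hadd : IsGradedSubsemigroup Γ) (hΦ : SuperadditiveOn Φ Γ)
    (hx : ((1 : ℝ), x) ∈ interior (realCone Γ : Set (ℝ × (Fin d → ℝ))))
    (hz : Tendsto (fun k : ℕ => (k : ℝ)⁻¹ • nptToReal (z k)) atTop (nhds (1, x))) {s : ℝ}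
    (hs : s < concaveTransform Γ Φ x) : ∀ᶠ k in atTop, z k ∈ Γ ∧ s < Φ (z k) / k := by
  obtain ⟨r₀, hr₀⟩ := hΓ.exists_mem_strictGraphCone Φ hx
  obtain ⟨r₁, hr₁, hsr₁⟩ := exists_lt_of_lt_csSup ⟨r₀, strictGraphCone_subset_graphCone hr₀⟩ hs
  have hlim : Tendsto (fun δ : ℝ => δ * r₀ + (1 - δ) * r₁) (nhdsWithin 0 (Set.Ioi 0)) (nhds r₁) :=
    (Continuous.tendsto' (by fun_prop) 0 r₁ (by simp)).mono_left nhdsWithin_le_nhds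
  obtain ⟨δ, hδs, hδ0, hδ1⟩ := ((hlim.eventually_const_lt hsr₁).and
    (Ioo_mem_nhdsGT one_pos)).exists
  have hmix : δ • (((1 : ℝ), x), r₀) + (1 - δ) • (((1 : ℝ), x), r₁) =
      ((1, x), δ * r₀ + (1 - δ) * r₁) := by
    ext1
    · exact Convex.combo_self (add_sub_cancel _ _) _
    · rfl
  exact hΦ.eventually_lt_div hadd (hmix ▸ add_mem_strictGraphCone
    (smul_mem_strictGraphCone hr₀ hδ0) ((graphCone Γ Φ).smul_mem (sub_nonneg.2 hδ1.le) hr₁)) hz hδs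

lemma GeneratesFullLattice.eventually_mem (hΓ : GeneratesFullLattice Γ)
    (hadd : IsGradedSubsemigroup Γ)
    (hx : ((1 : ℝ), x) ∈ interior (realCone Γ : Set (ℝ × (Fin d → ℝ))))
    (hz : Tendsto (fun k : ℕ => (k : ℝ)⁻¹ • nptToReal (z k)) atTop (nhds (1, x))) :
    ∀ᶠ k in atTop, z k ∈ Γ := by
  have hzero : SuperadditiveOn (fun _ : NPt d => (0 : ℝ)) Γ := fun _ _ _ _ => (add_zero 0).le
  exact (hΓ.eventually_lt_div hadd hzero hx hz (sub_one_lt _)).mono fun _ hk => hk.1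

/-- The graph point of `z k`, scaled by `k⁻¹`, is mixed with a cone point over the remainder `w k`
that takes `k⁻¹ • z k` to `(1, x)`, so the mixture lies below the concave transform. -/
lemma GeneratesFullLattice.eventually_div_lt (hΓ : GeneratesFullLattice Γ)
    (hadd : IsGradedSubsemigroup Γ) (hΦC : ∀ p ∈ Γ, |Φ p| ≤ C * p.1)
    (hx : ((1 : ℝ), x) ∈ interior (realCone Γ : Set (ℝ × (Fin d → ℝ))))
    (hz : Tendsto (fun k : ℕ => (k : ℝ)⁻¹ • nptToReal (z k)) atTop (nhds (1, x))) {s : ℝ}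
    (hs : concaveTransform Γ Φ x < s) : ∀ᶠ k in atTop, Φ (z k) / k < s := by
  obtain ⟨r₀, hr₀⟩ := hΓ.exists_mem_strictGraphCone Φ hx
  have hlim : Tendsto (fun δ : ℝ => (1 - δ) * s + δ * r₀) (nhdsWithin 0 (Set.Ioi 0)) (nhds s) :=
    (Continuous.tendsto' (by fun_prop) 0 s (by simp)).mono_left nhdsWithin_le_nhds
  obtain ⟨δ, hδs, hδ0, hδ1⟩ := ((hlim.eventually_const_lt hs).and (Ioo_mem_nhdsGT one_pos)).exists
  set w : ℕ → ℝ × (Fin d → ℝ) := fun k =>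
    δ⁻¹ • ((1, x) - (1 - δ) • (k : ℝ)⁻¹ • nptToReal (z k))
  have hw : Tendsto w atTop (nhds (1, x)) := by
    have hsub := ((hz.const_smul (1 - δ)).const_sub ((1 : ℝ), x)).const_smul δ⁻¹
    rwa [sub_smul, one_smul, sub_sub_cancel, inv_smul_smul₀ hδ0.ne'] at hsub
  obtain ⟨ρ, hρ, hwρ⟩ := exists_tendsto_mem_graphCone hr₀ hw
  filter_upwards [hΓ.eventually_mem hadd hx hz, hwρ,
    ((hρ.const_mul δ).const_add ((1 - δ) * s)).eventually_const_lt hδs] with k hzk hwk hρk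
  have hmix : (1 - δ) • (k : ℝ)⁻¹ • (nptToReal (z k), Φ (z k)) + δ • (w k, ρ k) =
      ((1, x), (1 - δ) * (Φ (z k) / k) + δ * ρ k) := by
    ext1
    · simp [w, smul_inv_smul₀ hδ0.ne']
    · simp [div_eq_inv_mul]
  have hmem : (((1 : ℝ), x), (1 - δ) * (Φ (z k) / k) + δ * ρ k) ∈ graphCone Γ Φ := by
    refine hmix ▸ add_mem ?_ ?_
    · exact (graphCone Γ Φ).smul_mem (sub_nonneg.2 hδ1.le)
        ((graphCone Γ Φ).smul_mem (inv_nonneg.2 k.cast_nonneg) (mk_mem_graphCone hzk))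
    · exact (graphCone Γ Φ).smul_mem hδ0.le hwk
  have hle : (1 - δ) * (Φ (z k) / k) + δ * ρ k ≤ concaveTransform Γ Φ x :=
    le_csSup (bddAbove_setOf_mem_graphCone hΦC _) hmem
  exact lt_of_mul_lt_mul_left (by linarith) (sub_nonneg.2 hδ1.le)

theorem GeneratesFullLattice.tendsto_div_concaveTransform (hΓ : GeneratesFullLattice Γ)
    (hadd : IsGradedSubsemigroup Γ)
    (hΦ : SuperadditiveOn Φ Γ) (hΦC : ∀ p ∈ Γ, |Φ p| ≤ C * p.1)
    (hx : ((1 : ℝ), x) ∈ interior (realCone Γ : Set (ℝ × (Fin d → ℝ))))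
    (hz : Tendsto (fun k : ℕ => (k : ℝ)⁻¹ • nptToReal (z k)) atTop (nhds (1, x))) :
    Tendsto (fun k : ℕ => Φ (z k) / k) atTop (nhds (concaveTransform Γ Φ x)) :=
  tendsto_order.2 ⟨fun _ hs => (hΓ.eventually_lt_div hadd hΦ hx hz hs).mono fun _ hk => hk.2,
    fun _ hs => hΓ.eventually_div_lt hadd hΦC hx hz hs⟩

end ConcaveTransform

section OkounkovBody

variable {d : ℕ} {Γ : Set (NPt d)} {x : Fin d → ℝ}

lemma isClosed_okounkovBody (Γ : Set (NPt d)) : IsClosed (okounkovBody Γ) :=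
  isClosed_closure.preimage (Continuous.prodMk_right 1)

lemma convex_okounkovBody (Γ : Set (NPt d)) : Convex ℝ (okounkovBody Γ) := by
  intro x hx y hy a b ha hb hab
  rw [mem_okounkovBody_iff] at hx hy ⊢
  simpa [hab] using (realCone Γ).convex.closure hx hy ha hb hab

lemma nonneg_apply_of_mem_okounkovBody (f : (ℝ × (Fin d → ℝ)) →L[ℝ] ℝ)
    (hf : ∀ p ∈ Γ, 0 ≤ f (nptToReal p)) (hx : x ∈ okounkovBody Γ) : 0 ≤ f (1, x) :=
  closure_minimal (fun _ hv => nonneg_of_mem_hull f.toLinearMap (Set.forall_mem_image.2 hf) hv)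
    (isClosed_Ici.preimage f.continuous) (mem_okounkovBody_iff.1 hx)

lemma nonneg_of_mem_okounkovBody (hx : x ∈ okounkovBody Γ) : 0 ≤ x := fun i =>
  nonneg_apply_of_mem_okounkovBody ((ContinuousLinearMap.proj (R := ℝ) (φ := fun _ => ℝ) i).comp
    (ContinuousLinearMap.snd ℝ ℝ (Fin d → ℝ))) (fun _ _ => Nat.cast_nonneg _) hx

lemma okounkovBody_subset_Icc {C : ℝ} (hC : ∀ p ∈ Γ, ∑ i, (p.2 i : ℝ) ≤ C * p.1) :
    okounkovBody Γ ⊆ Set.Icc 0 fun _ => C := by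
  refine fun x hx => ⟨nonneg_of_mem_okounkovBody hx, fun i => ?_⟩
  let deg := ContinuousLinearMap.fst ℝ ℝ (Fin d → ℝ)
  let coord := (ContinuousLinearMap.proj (R := ℝ) (φ := fun _ : Fin d => ℝ) i).comp
    (ContinuousLinearMap.snd ℝ ℝ (Fin d → ℝ))
  have hle := nonneg_apply_of_mem_okounkovBody (C • deg - coord) (fun p hp => sub_nonneg.2 <|
    (Finset.single_le_sum (fun j _ => Nat.cast_nonneg _) (Finset.mem_univ i)).trans (hC p hp)) hx
  simpa [deg, coord] using hle

lemma inv_smul_mem_okounkovBody {k : ℕ} (hk : k ≠ 0) {α : Fin d → ℕ} (hα : (k, α) ∈ Γ) :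
    (fun i => (α i : ℝ) / k) ∈ okounkovBody Γ := by
  have hmem := (realCone Γ).smul_mem (inv_nonneg.2 k.cast_nonneg)
    (PointedCone.subset_hull (Set.mem_image_of_mem nptToReal hα))
  have heq : (k : ℝ)⁻¹ • nptToReal (k, α) = (1, fun i => (α i : ℝ) / k) := by
    ext i
    · simp [nptToReal, hk]
    · simp [nptToReal, div_eq_inv_mul]
  exact mem_okounkovBody_iff.2 (subset_closure (heq ▸ hmem))

lemma mem_interior_realCone_of_mem_strictGraphCone {Φ : NPt d → ℝ} {v : ℝ × (Fin d → ℝ)} {r : ℝ}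
    (hv : (v, r) ∈ strictGraphCone Γ Φ) :
    v ∈ interior (realCone Γ : Set (ℝ × (Fin d → ℝ))) := by
  obtain ⟨ρ, -, hρ⟩ := exists_tendsto_mem_graphCone hv tendsto_id
  exact mem_interior_iff_mem_nhds.2
    (hρ.mono fun w hw => (mem_realCone_iff_exists_mem_graphCone Φ).2 ⟨ρ w, hw⟩)

lemma fst_pos_of_mem_interior_realCone {v : ℝ × (Fin d → ℝ)}
    (hv : v ∈ interior (realCone Γ : Set (ℝ × (Fin d → ℝ)))) : 0 < v.1 := by
  have hnonneg : Set.MapsTo Prod.fst (realCone Γ : Set (ℝ × (Fin d → ℝ))) (Set.Ici 0) :=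
    fun _ hw => nonneg_of_mem_hull (LinearMap.fst ℝ ℝ (Fin d → ℝ))
      (Set.forall_mem_image.2 fun _ _ => Nat.cast_nonneg _) hw
  simpa using isOpenMap_fst.mapsTo_interior hnonneg hv

lemma smul_mem_interior_realCone {v : ℝ × (Fin d → ℝ)}
    (hv : v ∈ interior (realCone Γ : Set (ℝ × (Fin d → ℝ)))) {c : ℝ} (hc : 0 < c) :
    c • v ∈ interior (realCone Γ : Set (ℝ × (Fin d → ℝ))) :=
  (isOpenMap_smul₀ hc.ne').mapsTo_interior (fun _ hw => (realCone Γ).smul_mem hc.le hw) hv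

lemma GeneratesFullLattice.exists_mk_one_mem_interior_realCone (hΓ : GeneratesFullLattice Γ) :
    ∃ x : Fin d → ℝ, ((1 : ℝ), x) ∈ interior (realCone Γ : Set (ℝ × (Fin d → ℝ))) := by
  obtain ⟨⟨v, r⟩, hr⟩ := hΓ.strictGraphCone_nonempty 0
  have hv := mem_interior_realCone_of_mem_strictGraphCone hr
  have hv1 := fst_pos_of_mem_interior_realCone hv
  have heq : v.1⁻¹ • v = (1, v.1⁻¹ • v.2) := Prod.ext (inv_mul_cancel₀ hv1.ne') rfl
  exact ⟨_, heq ▸ smul_mem_interior_realCone hv (inv_pos.2 hv1)⟩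

/-- Prolonging the segment from an interior point `(1, x₀)` of the cone through `(1, x)` stays in
the closed cone, so `(1, x)` is an interior point too. -/
lemma GeneratesFullLattice.mk_one_mem_interior_realCone (hΓ : GeneratesFullLattice Γ)
    (hx : x ∈ interior (okounkovBody Γ)) :
    ((1 : ℝ), x) ∈ interior (realCone Γ : Set (ℝ × (Fin d → ℝ))) := by
  obtain ⟨x₀, hx₀⟩ := hΓ.exists_mk_one_mem_interior_realCone
  have hlim : Tendsto (fun t : ℝ => x + t • (x - x₀)) (nhdsWithin 0 (Set.Ioi 0)) (nhds x) :=
    (Continuous.tendsto' (by fun_prop) 0 x (by simp)).mono_left nhdsWithin_le_nhds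
  obtain ⟨t, hy, ht⟩ := ((hlim.eventually_mem (mem_interior_iff_mem_nhds.1 hx)).and
    self_mem_nhdsWithin).exists
  have ht1 : 0 < 1 + t := add_pos one_pos ht
  have hweights : t / (1 + t) + 1 / (1 + t) = 1 := by
    rw [← add_div, add_comm, div_self ht1.ne']
  have hcombo : (t / (1 + t)) • ((1 : ℝ), x₀) + (1 / (1 + t)) • ((1 : ℝ), x + t • (x - x₀)) =
      (1, x) := by
    ext i
    · simpa using hweights
    · simp only [Prod.snd_add, Prod.smul_snd, Pi.add_apply, Pi.smul_apply, Pi.sub_apply,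
        smul_eq_mul]
      field_simp
      ring
  rw [← hcombo]
  exact (realCone Γ).convex.combo_interior_closure_mem_interior hx₀ (mem_okounkovBody_iff.1 hy)
    (div_pos ht ht1) (one_div_nonneg.2 ht1.le) hweights

lemma GeneratesFullLattice.interior_okounkovBody_nonempty (hΓ : GeneratesFullLattice Γ) :
    (interior (okounkovBody Γ)).Nonempty := by
  obtain ⟨x, hx⟩ := hΓ.exists_mk_one_mem_interior_realCone
  have hsub : (fun x => ((1 : ℝ), x)) ⁻¹' interior (realCone Γ : Set (ℝ × (Fin d → ℝ))) ⊆
      okounkovBody Γ := fun _ hy => mem_okounkovBody_iff.2 (subset_closure (interior_subset hy))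
  exact ⟨x, interior_maximal hsub (isOpen_interior.preimage (Continuous.prodMk_right 1)) hx⟩

end OkounkovBody

section DominatedConvergence

lemma tendsto_setIntegral_of_norm_le_const {α ι E : Type*} [MeasurableSpace α] {μ : Measure α}
    [NormedAddCommGroup E] [NormedSpace ℝ E] {l : Filter ι} [l.IsCountablyGenerated]
    {D : ι → Set α} {D' K : Set α} {F : ι → α → E} {G : α → E} {B : ℝ}
    (hD : ∀ i, MeasurableSet (D i)) (hD' : MeasurableSet D') (hK : MeasurableSet K)
    (hKfin : μ K ≠ ∞) (hDK : ∀ᶠ i in l, D i ⊆ K) (hF : ∀ i, AEStronglyMeasurable (F i) μ)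
    (hB : ∀ i x, ‖F i x‖ ≤ B)
    (hin : ∀ᵐ x ∂μ, x ∈ D' → (∀ᶠ i in l, x ∈ D i) ∧ Tendsto (F · x) l (nhds (G x)))
    (hout : ∀ᵐ x ∂μ, x ∉ D' → ∀ᶠ i in l, x ∉ D i) :
    Tendsto (fun i => ∫ x in D i, F i x ∂μ) l (nhds (∫ x in D', G x ∂μ)) := by
  simp only [← integral_indicator (hD _), ← integral_indicator hD']
  refine tendsto_integral_filter_of_dominated_convergence (K.indicator fun _ => B)
    (.of_forall fun i => (hF i).indicator (hD i)) ?_ ?_ ?_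
  · filter_upwards [hDK] with i hi
    refine .of_forall fun x => ?_
    have hB0 : 0 ≤ B := (norm_nonneg _).trans (hB i x)
    by_cases hx : x ∈ D i
    · simpa [hx, hi hx] using hB i x
    · simpa [hx] using Set.indicator_nonneg (fun _ _ => hB0) x
  · exact (integrable_indicator_iff hK).2 (integrableOn_const hKfin)
  · filter_upwards [hin, hout] with x hxin hxout
    by_cases hx : x ∈ D'
    · rw [Set.indicator_of_mem hx]
      refine (hxin hx).2.congr' ?_
      filter_upwards [(hxin hx).1] with i hi
      rw [Set.indicator_of_mem hi]
    · rw [Set.indicator_of_notMem hx]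
      refine tendsto_const_nhds.congr' ?_
      filter_upwards [hxout hx] with i hi
      rw [Set.indicator_of_notMem hi]

end DominatedConvergence

section LatticeCells

variable {d : ℕ} {Γ : Set (NPt d)} {x : Fin d → ℝ} {k : ℕ} {α : Fin d → ℕ}

/-- The point of degree `k` whose rescaling by `k⁻¹` rounds `x` down to `(k⁻¹ℕ)^d`. Negative
coordinates of `x` are rounded to `0`. -/
noncomputable def floorPoint (x : Fin d → ℝ) (k : ℕ) : NPt d :=
  (k, fun i => ⌊x i * k⌋₊)

/-- The half-open cube of side `k⁻¹` whose lower corner is `k⁻¹ • α`. -/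
def latticeCell (k : ℕ) (α : Fin d → ℕ) : Set (Fin d → ℝ) :=
  Set.univ.pi fun i => Set.Ico ((α i : ℝ) / k) ((α i + 1) / k)

/-- The union of the cubes `latticeCell k α`, `α ∈ Γ_k`: integrals of step functions over it are
Riemann sums over `Γ_k`. -/
def gradedRegion (Γ : Set (NPt d)) (k : ℕ) : Set (Fin d → ℝ) :=
  ⋃ α : {α : Fin d → ℕ // (k, α) ∈ Γ}, latticeCell k α.1

lemma tendsto_inv_smul_floorPoint (hx : 0 ≤ x) :
    Tendsto (fun k : ℕ => (k : ℝ)⁻¹ • nptToReal (floorPoint x k)) atTop (nhds (1, x)) := by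
  refine Tendsto.prodMk_nhds ?_ (tendsto_pi_nhds.2 fun i => ?_)
  · refine tendsto_const_nhds.congr' ?_
    filter_upwards [eventually_ne_atTop 0] with k hk
    exact (inv_mul_cancel₀ (Nat.cast_ne_zero.2 hk)).symm
  · refine ((tendsto_nat_floor_mul_div_atTop (hx i)).comp tendsto_natCast_atTop_atTop).congr ?_
    exact fun k => div_eq_inv_mul _ _

lemma measurable_floorPoint (k : ℕ) : Measurable fun x : Fin d → ℝ => floorPoint x k := by
  unfold floorPoint
  fun_prop

lemma mem_latticeCell_iff (hk : k ≠ 0) :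
    x ∈ latticeCell k α ↔ 0 ≤ x ∧ floorPoint x k = (k, α) := by
  have hk' : (0 : ℝ) < k := Nat.cast_pos.2 hk.bot_lt
  have hcoord (i : Fin d) : x i ∈ Set.Ico ((α i : ℝ) / k) ((α i + 1) / k) ↔
      0 ≤ x i ∧ ⌊x i * k⌋₊ = α i := by
    rw [Set.mem_Ico, div_le_iff₀ hk', lt_div_iff₀ hk']
    constructor
    · rintro ⟨hle, hlt⟩
      have hx : 0 ≤ x i * k := (Nat.cast_nonneg _).trans hle
      exact ⟨nonneg_of_mul_nonneg_left hx hk', (Nat.floor_eq_iff hx).2 ⟨hle, hlt⟩⟩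
    · rintro ⟨hx, hfloor⟩
      exact (Nat.floor_eq_iff (mul_nonneg hx hk'.le)).1 hfloor
  simp only [latticeCell, Set.mem_univ_pi, hcoord, forall_and, floorPoint, Prod.mk.injEq,
    true_and, funext_iff, Pi.le_def, Pi.zero_apply]

lemma mem_gradedRegion_iff (hk : k ≠ 0) : x ∈ gradedRegion Γ k ↔ 0 ≤ x ∧ floorPoint x k ∈ Γ := by
  simp only [gradedRegion, Set.mem_iUnion, mem_latticeCell_iff hk]
  exact ⟨fun ⟨α, hx, hα⟩ => ⟨hx, hα ▸ α.2⟩, fun ⟨hx, hmem⟩ => ⟨⟨_, hmem⟩, hx, rfl⟩⟩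

lemma measurableSet_latticeCell (k : ℕ) (α : Fin d → ℕ) : MeasurableSet (latticeCell k α) :=
  .univ_pi fun _ => measurableSet_Ico

lemma measurableSet_gradedRegion (Γ : Set (NPt d)) (k : ℕ) : MeasurableSet (gradedRegion Γ k) :=
  .iUnion fun α => measurableSet_latticeCell k α.1

lemma pairwise_disjoint_latticeCell (hk : k ≠ 0) :
    Pairwise (Function.onFun Disjoint (latticeCell (d := d) k)) := by
  refine fun α β hαβ => Set.disjoint_left.2 fun x hα hβ => hαβ ?_
  exact (Prod.mk.inj (((mem_latticeCell_iff hk).1 hα).2.symm.trans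
    ((mem_latticeCell_iff hk).1 hβ).2)).2

lemma volume_latticeCell (k : ℕ) (α : Fin d → ℕ) :
    volume (latticeCell k α) = ENNReal.ofReal (k : ℝ)⁻¹ ^ d := by
  simp [latticeCell, Real.volume_pi_Ico, ← sub_div]

lemma setIntegral_gradedRegion [Fintype {α : Fin d → ℕ // (k, α) ∈ Γ}] (hk : k ≠ 0)
    (w : NPt d → ℝ) :
    ∫ x in gradedRegion Γ k, w (floorPoint x k) =
      (k : ℝ)⁻¹ ^ d * ∑ α : {α : Fin d → ℕ // (k, α) ∈ Γ}, w (k, α) := by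
  have hcell (α : Fin d → ℕ) :
      Set.EqOn (fun x => w (floorPoint x k)) (fun _ => w (k, α)) (latticeCell k α) :=
    fun x hx => congrArg w ((mem_latticeCell_iff hk).1 hx).2
  have hdisj : Pairwise (Function.onFun Disjoint
      fun α : {α : Fin d → ℕ // (k, α) ∈ Γ} => latticeCell k α.1) :=
    fun α β hαβ => pairwise_disjoint_latticeCell hk (Subtype.coe_ne_coe.2 hαβ)
  have hint (α : Fin d → ℕ) : IntegrableOn (fun x => w (floorPoint x k)) (latticeCell k α) :=
    (integrableOn_congr_fun (hcell α) (measurableSet_latticeCell k α)).2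
      (integrableOn_const (by simp [volume_latticeCell]))
  have hcell_int (α : Fin d → ℕ) :
      ∫ x in latticeCell k α, w (floorPoint x k) = (k : ℝ)⁻¹ ^ d * w (k, α) := by
    rw [setIntegral_congr_fun (measurableSet_latticeCell k α) (hcell α), setIntegral_const,
      Measure.real, volume_latticeCell, ENNReal.toReal_pow,
      ENNReal.toReal_ofReal (by positivity), smul_eq_mul]
  calc ∫ x in gradedRegion Γ k, w (floorPoint x k)
      = ∑ α : {α : Fin d → ℕ // (k, α) ∈ Γ}, ∫ x in latticeCell k α.1, w (floorPoint x k) :=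
        integral_iUnion_fintype (fun α => measurableSet_latticeCell k α.1) hdisj
          fun α => hint α.1
    _ = _ := by simp only [hcell_int, Finset.mul_sum]

lemma integral_relEmpiricalMeasure [Finite {α : Fin d → ℕ // (k, α) ∈ Γ}] (hk : k ≠ 0)
    (Φ Φ' : NPt d → ℝ) (f : ℝ → ℝ) :
    ∫ t, f t ∂relEmpiricalMeasure Γ Φ Φ' k =
      ⨍ x in gradedRegion Γ k, f ((Φ' (floorPoint x k) - Φ (floorPoint x k)) / k) := by
  have := Fintype.ofFinite {α : Fin d → ℕ // (k, α) ∈ Γ}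
  have hvol : volume.real (gradedRegion Γ k) =
      (k : ℝ)⁻¹ ^ d * Nat.card {α : Fin d → ℕ // (k, α) ∈ Γ} := by
    simpa using setIntegral_gradedRegion (Γ := Γ) hk fun _ => 1
  rw [setAverage_eq, hvol, setIntegral_gradedRegion hk fun p => f ((Φ' p - Φ p) / k),
    relEmpiricalMeasure, integral_smul_measure, Measure.sum_fintype,
    integral_finsetSum_measure fun _ _ => integrable_dirac enorm_lt_top]
  simp only [integral_dirac, ENNReal.toReal_inv, ENNReal.toReal_natCast, smul_eq_mul, mul_inv]
  field_simp

end LatticeCells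

section Equidistribution

variable {d : ℕ} {Γ : Set (NPt d)} {x : Fin d → ℝ} {C : ℝ}

lemma HasLinearGrowth.finite_gradedPiece (hΓ : HasLinearGrowth Γ) (k : ℕ) :
    (gradedPiece Γ k).Finite := by
  obtain ⟨C, -, hC⟩ := hΓ
  refine (Set.finite_Iic fun _ => ⌊C * k⌋₊).subset fun α hα i => Nat.le_floor ?_
  exact (Finset.single_le_sum (fun j _ => Nat.cast_nonneg _) (Finset.mem_univ i)).trans (hC _ hα)

lemma gradedRegion_subset_Icc (hC : ∀ p ∈ Γ, ∑ i, (p.2 i : ℝ) ≤ C * p.1) {k : ℕ} (hk : k ≠ 0) :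
    gradedRegion Γ k ⊆ Set.Icc 0 fun _ => C + 1 := by
  intro x hx
  obtain ⟨hx0, hmem⟩ := (mem_gradedRegion_iff hk).1 hx
  refine ⟨hx0, fun i => ?_⟩
  have hk1 : (1 : ℝ) ≤ k := Nat.one_le_cast.2 (Nat.one_le_iff_ne_zero.2 hk)
  have hfloor : (⌊x i * k⌋₊ : ℝ) / k ≤ C :=
    (okounkovBody_subset_Icc hC (inv_smul_mem_okounkovBody hk hmem)).2 i
  have hlt : x i * k < ⌊x i * k⌋₊ + 1 := Nat.lt_floor_add_one _
  rw [div_le_iff₀ (by linarith)] at hfloor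
  refine le_of_mul_le_mul_right ?_ (zero_lt_one.trans_le hk1)
  linarith

lemma HasLinearGrowth.volume_okounkovBody_ne_top (hΓ : HasLinearGrowth Γ) :
    volume (okounkovBody Γ) ≠ ∞ :=
  let ⟨_, _, hC⟩ := hΓ
  measure_ne_top_of_subset (okounkovBody_subset_Icc hC) isCompact_Icc.measure_ne_top

lemma GeneratesFullLattice.volume_okounkovBody_ne_zero (hΓ : GeneratesFullLattice Γ) :
    volume (okounkovBody Γ) ≠ 0 :=
  (Measure.measure_pos_of_nonempty_interior _ hΓ.interior_okounkovBody_nonempty).ne'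

lemma ae_mem_interior_okounkovBody (Γ : Set (NPt d)) :
    ∀ᵐ x : Fin d → ℝ, x ∈ okounkovBody Γ → x ∈ interior (okounkovBody Γ) := by
  filter_upwards [measure_eq_zero_iff_ae_notMem.1 ((convex_okounkovBody Γ).addHaar_frontier volume)]
    with x hx hxΔ
  by_contra hint
  exact hx ⟨subset_closure hxΔ, hint⟩

lemma eventually_notMem_gradedRegion (hx : x ∉ okounkovBody Γ) :
    ∀ᶠ k in atTop, x ∉ gradedRegion Γ k := by
  by_cases hx0 : 0 ≤ x
  · have hlim : Tendsto (fun k : ℕ => fun i => (⌊x i * k⌋₊ : ℝ) / k) atTop (nhds x) :=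
      tendsto_pi_nhds.2 fun i =>
        (tendsto_nat_floor_mul_div_atTop (hx0 i)).comp tendsto_natCast_atTop_atTop
    filter_upwards [hlim.eventually_mem ((isClosed_okounkovBody Γ).isOpen_compl.mem_nhds hx),
      eventually_ne_atTop 0] with k hk hk0 hmem
    exact hk (inv_smul_mem_okounkovBody hk0 ((mem_gradedRegion_iff hk0).1 hmem).2)
  · filter_upwards [eventually_ne_atTop 0] with k hk hmem
    exact hx0 ((mem_gradedRegion_iff hk).1 hmem).1

lemma GeneratesFullLattice.eventually_mem_gradedRegion (hΓ : GeneratesFullLattice Γ)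
    (hadd : IsGradedSubsemigroup Γ)
    (hx : x ∈ interior (okounkovBody Γ)) : ∀ᶠ k in atTop, x ∈ gradedRegion Γ k := by
  have hx0 := nonneg_of_mem_okounkovBody (interior_subset hx)
  filter_upwards [eventually_ne_atTop 0, hΓ.eventually_mem hadd
    (hΓ.mk_one_mem_interior_realCone hx) (tendsto_inv_smul_floorPoint hx0)] with k hk hmem
  exact (mem_gradedRegion_iff hk).2 ⟨hx0, hmem⟩

lemma GeneratesFullLattice.eventually_nonempty_gradedPiece (hΓ : GeneratesFullLattice Γ)
    (hadd : IsGradedSubsemigroup Γ) :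
    ∀ᶠ k in atTop, (gradedPiece Γ k).Nonempty := by
  obtain ⟨x, hx⟩ := hΓ.interior_okounkovBody_nonempty
  filter_upwards [hΓ.eventually_mem_gradedRegion hadd hx] with k hk
  obtain ⟨α, -⟩ := Set.mem_iUnion.1 hk
  exact ⟨α.1, α.2⟩

variable {E : Type*} [NormedAddCommGroup E] [NormedSpace ℝ E] {F : ℕ → (Fin d → ℝ) → E}
  {G : (Fin d → ℝ) → E} {B : ℝ}

lemma IsAdmissible.tendsto_setIntegral_gradedRegion (hΓ : IsAdmissible Γ)
    (hF : ∀ k, AEStronglyMeasurable (F k)) (hB : ∀ k x, ‖F k x‖ ≤ B)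
    (hFG : ∀ x ∈ interior (okounkovBody Γ), Tendsto (F · x) atTop (nhds (G x))) :
    Tendsto (fun k => ∫ x in gradedRegion Γ k, F k x) atTop
      (nhds (∫ x in okounkovBody Γ, G x)) := by
  obtain ⟨C, -, hC⟩ := hΓ.2.1
  refine tendsto_setIntegral_of_norm_le_const (measurableSet_gradedRegion Γ)
    (isClosed_okounkovBody Γ).measurableSet measurableSet_Icc isCompact_Icc.measure_ne_top
    ((eventually_ne_atTop 0).mono fun k hk => gradedRegion_subset_Icc hC hk) hF hB ?_
    (.of_forall fun x hx => eventually_notMem_gradedRegion hx)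
  filter_upwards [ae_mem_interior_okounkovBody Γ] with x hint hx
  exact ⟨hΓ.2.2.eventually_mem_gradedRegion hΓ.1 (hint hx), hFG x (hint hx)⟩

theorem IsAdmissible.tendsto_setAverage_gradedRegion (hΓ : IsAdmissible Γ)
    (hF : ∀ k, AEStronglyMeasurable (F k)) (hB : ∀ k x, ‖F k x‖ ≤ B)
    (hFG : ∀ x ∈ interior (okounkovBody Γ), Tendsto (F · x) atTop (nhds (G x))) :
    Tendsto (fun k => ⨍ x in gradedRegion Γ k, F k x) atTop
      (nhds (⨍ x in okounkovBody Γ, G x)) := by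
  have hvol : Tendsto (fun k => volume.real (gradedRegion Γ k)) atTop
      (nhds (volume.real (okounkovBody Γ))) := by
    simpa using hΓ.tendsto_setIntegral_gradedRegion (F := fun _ _ => (1 : ℝ)) (G := fun _ => 1)
      (fun _ => aestronglyMeasurable_const) (fun _ _ => norm_one.le) fun _ _ => tendsto_const_nhds
  simp only [setAverage_eq]
  exact (hvol.inv₀ (ENNReal.toReal_ne_zero.2 ⟨hΓ.2.2.volume_okounkovBody_ne_zero,
    hΓ.2.1.volume_okounkovBody_ne_top⟩)).smul (hΓ.tendsto_setIntegral_gradedRegion hF hB hFG)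

end Equidistribution

section LimitMeasure

variable {d : ℕ} {Γ : Set (NPt d)} {Φ Φ' : NPt d → ℝ} {x : Fin d → ℝ} {C : ℝ}

/-- The distribution of the difference of the concave transforms of `Φ'` and `Φ` at a point chosen
uniformly in the Okounkov body; it is the weak limit of `relEmpiricalMeasure Γ Φ Φ'`. -/
noncomputable def relLimitMeasure (Γ : Set (NPt d)) (Φ Φ' : NPt d → ℝ) : Measure ℝ :=
  (ProbabilityTheory.cond volume (okounkovBody Γ)).map
    fun x => concaveTransform Γ Φ' x - concaveTransform Γ Φ x

lemma measurable_sub_div_floorPoint (Φ Φ' : NPt d → ℝ) (k : ℕ) :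
    Measurable fun x => (Φ' (floorPoint x k) - Φ (floorPoint x k)) / k :=
  (Measurable.of_discrete (f := fun p => (Φ' p - Φ p) / k)).comp (measurable_floorPoint k)

lemma GeneratesFullLattice.tendsto_sub_div_floorPoint (hΓ : GeneratesFullLattice Γ)
    (hadd : IsGradedSubsemigroup Γ) (hΦ : SuperadditiveOn Φ Γ)
    (hΦ' : SuperadditiveOn Φ' Γ) (hΦC : ∀ p ∈ Γ, |Φ p| ≤ C * p.1)
    (hΦC' : ∀ p ∈ Γ, |Φ' p| ≤ C * p.1) (hx : x ∈ interior (okounkovBody Γ)) :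
    Tendsto (fun k : ℕ => (Φ' (floorPoint x k) - Φ (floorPoint x k)) / k) atTop
      (nhds (concaveTransform Γ Φ' x - concaveTransform Γ Φ x)) := by
  have hz := tendsto_inv_smul_floorPoint
    (nonneg_of_mem_okounkovBody (interior_subset hx))
  have hx' := hΓ.mk_one_mem_interior_realCone hx
  simp only [sub_div]
  exact (hΓ.tendsto_div_concaveTransform hadd hΦ' hΦC' hx' hz).sub
    (hΓ.tendsto_div_concaveTransform hadd hΦ hΦC hx' hz)

lemma GeneratesFullLattice.aemeasurable_sub_concaveTransform (hΓ : GeneratesFullLattice Γ)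
    (hadd : IsGradedSubsemigroup Γ)
    (hΦ : SuperadditiveOn Φ Γ) (hΦ' : SuperadditiveOn Φ' Γ) (hΦC : ∀ p ∈ Γ, |Φ p| ≤ C * p.1)
    (hΦC' : ∀ p ∈ Γ, |Φ' p| ≤ C * p.1) :
    AEMeasurable (fun x => concaveTransform Γ Φ' x - concaveTransform Γ Φ x)
      (ProbabilityTheory.cond volume (okounkovBody Γ)) := by
  refine aemeasurable_of_tendsto_metrizable_ae atTop
    (fun k => (measurable_sub_div_floorPoint Φ Φ' k).aemeasurable) ?_
  filter_upwards [ProbabilityTheory.ae_cond_mem (isClosed_okounkovBody Γ).measurableSet,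
    ProbabilityTheory.cond_absolutelyContinuous.ae_le (ae_mem_interior_okounkovBody Γ)]
    with x hx hint
  exact hΓ.tendsto_sub_div_floorPoint hadd hΦ hΦ' hΦC hΦC' (hint hx)

lemma IsAdmissible.isProbabilityMeasure_relLimitMeasure (hΓ : IsAdmissible Γ)
    (hΦ : SuperadditiveOn Φ Γ) (hΦ' : SuperadditiveOn Φ' Γ) (hΦC : ∀ p ∈ Γ, |Φ p| ≤ C * p.1)
    (hΦC' : ∀ p ∈ Γ, |Φ' p| ≤ C * p.1) : IsProbabilityMeasure (relLimitMeasure Γ Φ Φ') := by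
  have := ProbabilityTheory.cond_isProbabilityMeasure_of_finite
    hΓ.2.2.volume_okounkovBody_ne_zero hΓ.2.1.volume_okounkovBody_ne_top
  exact Measure.isProbabilityMeasure_map
    (hΓ.2.2.aemeasurable_sub_concaveTransform hΓ.1 hΦ hΦ' hΦC hΦC')

lemma relLimitMeasure_compl_Icc (hC : 0 ≤ C) (hΦC : ∀ p ∈ Γ, |Φ p| ≤ C * p.1)
    (hΦC' : ∀ p ∈ Γ, |Φ' p| ≤ C * p.1) :
    relLimitMeasure Γ Φ Φ' (Set.Icc (-(C + C)) (C + C))ᶜ = 0 := by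
  have hmem (x : Fin d → ℝ) :
      concaveTransform Γ Φ' x - concaveTransform Γ Φ x ∈ Set.Icc (-(C + C)) (C + C) :=
    abs_le.1 ((abs_sub _ _).trans
      (add_le_add (abs_concaveTransform_le hC hΦC' x) (abs_concaveTransform_le hC hΦC x)))
  by_cases hmeas : AEMeasurable (fun x => concaveTransform Γ Φ' x - concaveTransform Γ Φ x)
      (ProbabilityTheory.cond volume (okounkovBody Γ))
  · rw [relLimitMeasure, Measure.map_apply_of_aemeasurable hmeas measurableSet_Icc.compl]
    exact measure_mono_null (fun x hx => hx (hmem x)) measure_empty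
  · simp [relLimitMeasure, Measure.map_of_not_aemeasurable hmeas]

theorem IsAdmissible.tendsto_integral_relEmpiricalMeasure (hΓ : IsAdmissible Γ)
    (hΦ : SuperadditiveOn Φ Γ) (hΦ' : SuperadditiveOn Φ' Γ) (hΦC : ∀ p ∈ Γ, |Φ p| ≤ C * p.1)
    (hΦC' : ∀ p ∈ Γ, |Φ' p| ≤ C * p.1) (f : BoundedContinuousFunction ℝ ℝ) :
    Tendsto (fun k => ∫ t, f t ∂relEmpiricalMeasure Γ Φ Φ' k) atTop
      (nhds (∫ t, f t ∂relLimitMeasure Γ Φ Φ')) := by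
  have hlimit : ∫ t, f t ∂relLimitMeasure Γ Φ Φ' =
      ⨍ x in okounkovBody Γ, f (concaveTransform Γ Φ' x - concaveTransform Γ Φ x) := by
    rw [relLimitMeasure,
      integral_map (hΓ.2.2.aemeasurable_sub_concaveTransform hΓ.1 hΦ hΦ' hΦC hΦC')
        f.continuous.aestronglyMeasurable, average, Measure.restrict_apply_univ,
      ProbabilityTheory.cond]
  rw [hlimit]
  refine (hΓ.tendsto_setAverage_gradedRegion
    (fun k => (f.continuous.measurable.comp
      (measurable_sub_div_floorPoint Φ Φ' k)).aestronglyMeasurable)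
    (fun _ _ => f.norm_coe_le_norm _) fun x hx => (f.continuous.tendsto _).comp
      (hΓ.2.2.tendsto_sub_div_floorPoint hΓ.1 hΦ hΦ' hΦC hΦC' hx)).congr' ?_
  filter_upwards [eventually_ne_atTop 0] with k hk
  have : Finite {α : Fin d → ℕ // (k, α) ∈ Γ} := hΓ.2.1.finite_gradedPiece k
  exact (integral_relEmpiricalMeasure hk Φ Φ' f).symm

end LimitMeasure

/-- For two superadditive, linearly bounded functions `Φ, Φ'` on an admissible graded
subsemigroup `Γ`, the graded pieces are eventually nonempty and the relative empirical
measures `ν_k` converge weakly to a compactly supported probability measure on `ℝ`. -/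
theorem relEmpiricalMeasure_tendsto_limit
    (d : ℕ) (hd : 1 ≤ d) (Γ : Set (NPt d)) (hΓ : IsAdmissible Γ)
    (Φ Φ' : NPt d → ℝ)
    (hsuper : ∀ x ∈ Γ, ∀ y ∈ Γ, Φ x + Φ y ≤ Φ (x + y))
    (hsuper' : ∀ x ∈ Γ, ∀ y ∈ Γ, Φ' x + Φ' y ≤ Φ' (x + y))
    (hbdd : ∃ C : ℝ, 0 < C ∧ ∀ p ∈ Γ, |Φ p| ≤ C * p.1 ∧ |Φ' p| ≤ C * p.1) :
    (∃ K₀ : ℕ, ∀ k : ℕ, K₀ ≤ k → (gradedPiece Γ k).Nonempty) ∧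
    ∃ μ : Measure ℝ, IsProbabilityMeasure μ ∧
      (∃ s : Set ℝ, IsCompact s ∧ μ sᶜ = 0) ∧
      (∀ f : BoundedContinuousFunction ℝ ℝ,
        Filter.Tendsto (fun k : ℕ => ∫ x, f x ∂(relEmpiricalMeasure Γ Φ Φ' k)) Filter.atTop
          (nhds (∫ x, f x ∂μ))) := by
  obtain ⟨C, hC, hΦC⟩ := hbdd
  have hΦ : ∀ p ∈ Γ, |Φ p| ≤ C * p.1 := fun p hp => (hΦC p hp).1
  have hΦ' : ∀ p ∈ Γ, |Φ' p| ≤ C * p.1 := fun p hp => (hΦC p hp).2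
  exact ⟨eventually_atTop.1 (hΓ.2.2.eventually_nonempty_gradedPiece hΓ.1),
    relLimitMeasure Γ Φ Φ',
    hΓ.isProbabilityMeasure_relLimitMeasure hsuper hsuper' hΦ hΦ',
    ⟨Set.Icc (-(C + C)) (C + C), isCompact_Icc, relLimitMeasure_compl_Icc hC.le hΦ hΦ'⟩,
    hΓ.tendsto_integral_relEmpiricalMeasure hsuper hsuper' hΦ hΦ'⟩
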